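/- Sharp threshold for symmetric functions: There exists a universal constant c > 0 such that for every p ∈ (0,1), every n ≥ 2, and every increasing boolean function f : {0,1}^n → {0,1} that is invariant under some subgroup 𝔖 of permutations of {1,…,n} acting transitively on {1,…,n} (i.e. f(ω ∘ σ) = f(ω) for all σ ∈ 𝔖 and all ω, and for every i, j there is σ ∈ 𝔖 with σ(i) = j), the derivative of f(p) := 𝔼_p[f] satisfies f'(p) ≥ c · (log n) · Var_p(f). -/

import Mathlib

open scoped Classical

section BooleanAnalysis

variable {ι : Type*} [Fintype ι] [DecidableEq ι]

/-- The Bernoulli(`p`) product weight of a configuration `ω ∈ {0,1}^ι`: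
`∏ i, p^{ω i}(1-p)^{1-ω i}`.  Summing a function against these weights gives its
expectation under the product measure `ℙ_p`. -/
noncomputable def bernoulliWeight (p : ℝ) (ω : ι → Bool) : ℝ :=
  ∏ i : ι, if ω i then p else 1 - p

/-- Expectation `𝔼_p[g]` of `g : {0,1}^ι → ℝ` under the product Bernoulli(`p`) measure. -/
noncomputable def bernoulliExp (p : ℝ) (g : (ι → Bool) → ℝ) : ℝ :=
  ∑ ω : ι → Bool, bernoulliWeight p ω * g ω

/-- The `{0,1}`-valued (real) indicator of a boolean function. -/
noncomputable def boolInd (f : (ι → Bool) → Bool) (ω : ι → Bool) : ℝ :=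
  if f ω then 1 else 0

/-- `f(p) := 𝔼_p[f]` for a boolean function `f`. -/
noncomputable def bernoulliMean (p : ℝ) (f : (ι → Bool) → Bool) : ℝ :=
  bernoulliExp p (boolInd f)

/-- The variance `Var_p(f)` of a boolean function under `ℙ_p`. -/
noncomputable def bernoulliVar (p : ℝ) (f : (ι → Bool) → Bool) : ℝ :=
  bernoulliExp p (fun ω => (boolInd f ω - bernoulliMean p f) ^ 2)

/-- `Flip_i(ω)`: flip the `i`-th coordinate of `ω`. -/
def flipCoord (i : ι) (ω : ι → Bool) : ι → Bool :=
  Function.update ω i (!ω i)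

/-- The influence `Inf_i[f] := 𝔼_p[|f(ω) - f(Flip_i ω)|]` of coordinate `i`, under `ℙ_p`. -/
noncomputable def influence (p : ℝ) (f : (ι → Bool) → Bool) (i : ι) : ℝ :=
  bernoulliExp p (fun ω => |boolInd f ω - boolInd f (flipCoord i ω)|)

/-- A boolean function is increasing if it is monotone w.r.t. the coordinatewise
partial order on `{0,1}^ι` (with `false ≤ true`). -/
def IncreasingBoolFun (f : (ι → Bool) → Bool) : Prop :=
  ∀ ω ω' : ι → Bool, (∀ i, ω i ≤ ω' i) → f ω ≤ f ω'

end BooleanAnalysis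

/-!
Following Falik and Samorodnitsky, split `g - 𝔼_p g` into the martingale differences obtained by
averaging out one coordinate after another, and apply the log-Sobolev inequality to each difference.
The Dirichlet energies of the differences add up to that of `g`, while their `L¹` norms are bounded
by the influences; as an entropy is large when the `L¹` norm is small compared with the `L²` norm,
this yields `Var_p(f) log s ≤ ∑ Inf_i + s ∑ Inf_i²` for every `s > 0`. Under a transitive symmetry
all influences agree, so `∑ Inf_i² = (∑ Inf_i)² / n`, and `s = √n` gives
`∑ Inf_i ≥ (1/4) (log n) Var_p(f)`. The Margulis–Russo formula identifies `∑ Inf_i` with the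
derivative.
-/

open Function

section Expectation

variable {ι : Type*} [Fintype ι] {p : ℝ}

theorem bernoulliWeight_nonneg (hp : p ∈ Set.Icc (0 : ℝ) 1) (ω : ι → Bool) :
    0 ≤ bernoulliWeight p ω :=
  Finset.prod_nonneg fun i _ => by split_ifs <;> linarith [hp.1, hp.2]

variable [DecidableEq ι]

theorem sum_bernoulliWeight (p : ℝ) : ∑ ω : ι → Bool, bernoulliWeight p ω = 1 := by
  have h := Finset.prod_univ_sum (fun _ : ι => (Finset.univ : Finset Bool))
    fun _ b => if b then p else 1 - p
  rw [Fintype.piFinset_univ] at h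
  simp [bernoulliWeight, ← h]

theorem bernoulliExp_const (p c : ℝ) : bernoulliExp p (fun _ : ι → Bool => c) = c := by
  rw [bernoulliExp, ← Finset.sum_mul, sum_bernoulliWeight, one_mul]

theorem bernoulliExp_add (p : ℝ) (g h : (ι → Bool) → ℝ) :
    bernoulliExp p (fun ω => g ω + h ω) = bernoulliExp p g + bernoulliExp p h := by
  simp only [bernoulliExp, mul_add, Finset.sum_add_distrib]

theorem bernoulliExp_sub (p : ℝ) (g h : (ι → Bool) → ℝ) :
    bernoulliExp p (fun ω => g ω - h ω) = bernoulliExp p g - bernoulliExp p h := by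
  simp only [bernoulliExp, mul_sub, Finset.sum_sub_distrib]

theorem bernoulliExp_const_mul (p c : ℝ) (g : (ι → Bool) → ℝ) :
    bernoulliExp p (fun ω => c * g ω) = c * bernoulliExp p g := by
  simp only [bernoulliExp, Finset.mul_sum, mul_left_comm]

theorem bernoulliExp_mono (hp : p ∈ Set.Icc (0 : ℝ) 1) {g h : (ι → Bool) → ℝ}
    (hgh : ∀ ω, g ω ≤ h ω) : bernoulliExp p g ≤ bernoulliExp p h :=
  Finset.sum_le_sum fun ω _ => mul_le_mul_of_nonneg_left (hgh ω) (bernoulliWeight_nonneg hp ω)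

theorem bernoulliExp_nonneg (hp : p ∈ Set.Icc (0 : ℝ) 1) {g : (ι → Bool) → ℝ}
    (hg : ∀ ω, 0 ≤ g ω) : 0 ≤ bernoulliExp p g :=
  Finset.sum_nonneg fun ω _ => mul_nonneg (bernoulliWeight_nonneg hp ω) (hg ω)

theorem bernoulliExp_mul_eq_zero (hp : p ∈ Set.Icc (0 : ℝ) 1) {g : (ι → Bool) → ℝ}
    (hg : ∀ ω, 0 ≤ g ω) (hg0 : bernoulliExp p g = 0) (h : (ι → Bool) → ℝ) :
    bernoulliExp p (fun ω => g ω * h ω) = 0 := by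
  have hterm := (Finset.sum_eq_zero_iff_of_nonneg fun ω _ =>
    mul_nonneg (bernoulliWeight_nonneg hp ω) (hg ω)).1 hg0
  exact Finset.sum_eq_zero fun ω hω => by rw [← mul_assoc, hterm ω hω, zero_mul]

theorem bernoulliExp_comp_equiv {κ : Type*} [Fintype κ] [DecidableEq κ] (p : ℝ) (e : ι ≃ κ)
    (g : (ι → Bool) → ℝ) : bernoulliExp p (fun ω => g (ω ∘ e)) = bernoulliExp p g := by
  refine Fintype.sum_equiv (e.symm.arrowCongr (Equiv.refl Bool)) _ _ fun ω => ?_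
  have hweight : bernoulliWeight p (ω ∘ e) = bernoulliWeight p ω :=
    e.prod_comp fun i => if ω i then p else 1 - p
  exact congrArg (· * g (ω ∘ e)) hweight.symm

end Expectation

section Coordinate

variable {ι : Type*} [DecidableEq ι] {p : ℝ} {i j : ι}

/-- The average of `g` over the `i`-th coordinate, that is, the conditional expectation of `g` under
`ℙ_p` given all the other coordinates. -/
def coordAvg (p : ℝ) (i : ι) (g : (ι → Bool) → ℝ) (ω : ι → Bool) : ℝ :=
  p * g (update ω i true) + (1 - p) * g (update ω i false)

/-- The discrete derivative of `g` in the direction `i`. Unlike `g ω - g (flipCoord i ω)`, it does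
not depend on `ω i`. -/
def discreteDeriv (i : ι) (g : (ι → Bool) → ℝ) (ω : ι → Bool) : ℝ :=
  g (update ω i true) - g (update ω i false)

theorem coordAvg_coordAvg (p : ℝ) (i : ι) (g : (ι → Bool) → ℝ) :
    coordAvg p i (coordAvg p i g) = coordAvg p i g := by
  funext ω
  simp only [coordAvg, update_idem]
  ring

theorem coordAvg_discreteDeriv (p : ℝ) (i : ι) (g : (ι → Bool) → ℝ) :
    coordAvg p i (discreteDeriv i g) = discreteDeriv i g := by
  funext ω
  simp only [coordAvg, discreteDeriv, update_idem]
  ring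

theorem discreteDeriv_coordAvg_self (p : ℝ) (i : ι) (g : (ι → Bool) → ℝ) (ω : ι → Bool) :
    discreteDeriv i (coordAvg p i g) ω = 0 := by
  simp only [coordAvg, discreteDeriv, update_idem, sub_self]

theorem discreteDeriv_coordAvg_of_ne (p : ℝ) (hij : j ≠ i) (g : (ι → Bool) → ℝ) :
    discreteDeriv j (coordAvg p i g) = coordAvg p i (discreteDeriv j g) := by
  funext ω
  simp only [coordAvg, discreteDeriv, update_comm hij]
  ring

theorem discreteDeriv_sub (j : ι) (g h : (ι → Bool) → ℝ) :
    discreteDeriv j (fun ω => g ω - h ω) = fun ω => discreteDeriv j g ω - discreteDeriv j h ω := by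
  funext ω
  simp only [discreteDeriv]
  ring

theorem coordAvg_sub_coordAvg_sq (p : ℝ) (i : ι) (g : (ι → Bool) → ℝ) (ω : ι → Bool) :
    coordAvg p i (fun η => (g η - coordAvg p i g η) ^ 2) ω =
      coordAvg p i (fun η => g η ^ 2) ω - coordAvg p i g ω ^ 2 := by
  simp only [coordAvg, update_idem]
  ring

theorem abs_coordAvg_le (hp : p ∈ Set.Icc (0 : ℝ) 1) (i : ι) (g : (ι → Bool) → ℝ)
    (ω : ι → Bool) : |coordAvg p i g ω| ≤ coordAvg p i (fun η => |g η|) ω := by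
  refine (abs_add_le _ _).trans_eq ?_
  rw [abs_mul, abs_mul, abs_of_nonneg hp.1, abs_of_nonneg (sub_nonneg.2 hp.2), coordAvg]

theorem abs_sub_coordAvg_le (hp : p ∈ Set.Icc (0 : ℝ) 1) (i : ι) (g : (ι → Bool) → ℝ)
    (ω : ι → Bool) : |g ω - coordAvg p i g ω| ≤ |discreteDeriv i g ω| := by
  obtain ⟨c, hc, hgc⟩ : ∃ c : ℝ, |c| ≤ 1 ∧ g ω - coordAvg p i g ω = c * discreteDeriv i g ω := by
    cases hω : ω i
    · refine ⟨-p, by rw [abs_neg, abs_of_nonneg hp.1]; exact hp.2, ?_⟩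
      rw [coordAvg, discreteDeriv, ← hω, update_eq_self]
      ring
    · refine ⟨1 - p, by rw [abs_of_nonneg] <;> linarith [hp.1, hp.2], ?_⟩
      rw [coordAvg, discreteDeriv, ← hω, update_eq_self]
      ring
  rw [hgc, abs_mul]
  exact mul_le_of_le_one_left (abs_nonneg _) hc

theorem dependsOn_coordAvg {S : Finset ι} (hi : i ∉ S) (p : ℝ) {g : (ι → Bool) → ℝ}
    (hg : DependsOn g (insert i S : Finset ι)) : DependsOn (coordAvg p i g) S := by
  intro ω η hωη
  have hupdate (b : Bool) : g (update ω i b) = g (update η i b) := by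
    have h := hg.update i b
    rw [Finset.erase_insert hi] at h
    exact h hωη
  simp only [coordAvg, hupdate]

theorem flipCoord_involutive (i : ι) : Involutive (flipCoord i) := fun ω => by
  simp [flipCoord]

variable [Fintype ι]

/-- The Bernoulli(`p`) product weight of the coordinates of `ω` other than the `i`-th one. -/
noncomputable def bernoulliWeightErase (p : ℝ) (i : ι) (ω : ι → Bool) : ℝ :=
  ∏ j ∈ Finset.univ.erase i, if ω j then p else 1 - p

theorem bernoulliWeightErase_update (p : ℝ) (i : ι) (b : Bool) (ω : ι → Bool) :
    bernoulliWeightErase p i (update ω i b) = bernoulliWeightErase p i ω :=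
  Finset.prod_congr rfl fun j hj => by rw [update_of_ne (Finset.ne_of_mem_erase hj)]

theorem bernoulliWeight_update (p : ℝ) (i : ι) (b : Bool) (ω : ι → Bool) :
    bernoulliWeight p (update ω i b) =
      (if b then p else 1 - p) * bernoulliWeightErase p i ω := by
  rw [bernoulliWeight, ← Finset.mul_prod_erase _ _ (Finset.mem_univ i), update_self,
    ← bernoulliWeightErase, bernoulliWeightErase_update]

theorem two_mul_sum_eq_sum_update (i : ι) (F : (ι → Bool) → ℝ) :
    2 * ∑ ω, F ω = ∑ ω, (F (update ω i true) + F (update ω i false)) := by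
  have hflip : ∑ ω, F (flipCoord i ω) = ∑ ω, F ω := Equiv.sum_comp (flipCoord_involutive i).toPerm F
  calc 2 * ∑ ω, F ω = ∑ ω, (F ω + F (flipCoord i ω)) := by
        rw [Finset.sum_add_distrib, hflip, two_mul]
    _ = ∑ ω, (F (update ω i true) + F (update ω i false)) := by
        refine Finset.sum_congr rfl fun ω _ => ?_
        cases hω : ω i
        · rw [flipCoord, hω, ← hω, update_eq_self, hω, add_comm, Bool.not_false]
        · rw [flipCoord, hω, ← hω, update_eq_self, hω, Bool.not_true]

theorem two_mul_bernoulliExp (p : ℝ) (i : ι) (g : (ι → Bool) → ℝ) :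
    2 * bernoulliExp p g = ∑ ω, bernoulliWeightErase p i ω * coordAvg p i g ω := by
  rw [bernoulliExp, two_mul_sum_eq_sum_update i]
  refine Finset.sum_congr rfl fun ω _ => ?_
  simp only [bernoulliWeight_update, coordAvg, if_true, Bool.false_eq_true, if_false]
  ring

theorem bernoulliExp_coordAvg (p : ℝ) (i : ι) (g : (ι → Bool) → ℝ) :
    bernoulliExp p (coordAvg p i g) = bernoulliExp p g := by
  have h := two_mul_bernoulliExp p i (coordAvg p i g)
  rw [coordAvg_coordAvg, ← two_mul_bernoulliExp] at h
  linarith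

theorem bernoulliExp_sq_eq_add (p : ℝ) (i : ι) (g : (ι → Bool) → ℝ) :
    bernoulliExp p (fun ω => g ω ^ 2) = bernoulliExp p (fun ω => coordAvg p i g ω ^ 2) +
      bernoulliExp p (fun ω => (g ω - coordAvg p i g ω) ^ 2) := by
  have hsq : coordAvg p i (fun η => (g η - coordAvg p i g η) ^ 2) =
      fun ω => coordAvg p i (fun η => g η ^ 2) ω - coordAvg p i g ω ^ 2 :=
    funext (coordAvg_sub_coordAvg_sq p i g)
  rw [← bernoulliExp_coordAvg p i fun ω => (g ω - coordAvg p i g ω) ^ 2, hsq, bernoulliExp_sub,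
    bernoulliExp_coordAvg]
  ring

theorem bernoulliExp_discreteDeriv_sq_eq_add (p : ℝ) (i j : ι) (g : (ι → Bool) → ℝ) :
    bernoulliExp p (fun ω => discreteDeriv j g ω ^ 2) =
      bernoulliExp p (fun ω => discreteDeriv j (coordAvg p i g) ω ^ 2) +
        bernoulliExp p (fun ω => discreteDeriv j (fun η => g η - coordAvg p i g η) ω ^ 2) := by
  rw [discreteDeriv_sub]
  obtain rfl | hij := eq_or_ne j i
  · simp [discreteDeriv_coordAvg_self, bernoulliExp_const]
  · rw [discreteDeriv_coordAvg_of_ne p hij, bernoulliExp_sq_eq_add p i]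

theorem bernoulliExp_abs_discreteDeriv_coordAvg_le (hp : p ∈ Set.Icc (0 : ℝ) 1) (hij : j ≠ i)
    (g : (ι → Bool) → ℝ) :
    bernoulliExp p (fun ω => |discreteDeriv j (coordAvg p i g) ω|) ≤
      bernoulliExp p (fun ω => |discreteDeriv j g ω|) := by
  rw [discreteDeriv_coordAvg_of_ne p hij,
    ← bernoulliExp_coordAvg p i fun ω => |discreteDeriv j g ω|]
  exact bernoulliExp_mono hp (abs_coordAvg_le hp i _)

end Coordinate

section Russo

variable {ι : Type*} [Fintype ι] [DecidableEq ι]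

theorem hasDerivAt_bernoulliWeight (p : ℝ) (ω : ι → Bool) :
    HasDerivAt (fun q => bernoulliWeight q ω)
      (∑ i, bernoulliWeightErase p i ω * if ω i then 1 else -1) p := by
  refine HasDerivAt.fun_finsetProd fun i _ => ?_
  split_ifs
  · exact hasDerivAt_id p
  · exact (hasDerivAt_id p).const_sub 1

theorem sum_bernoulliWeightErase_mul_sign_mul (p : ℝ) (i : ι) (g : (ι → Bool) → ℝ) :
    ∑ ω, (bernoulliWeightErase p i ω * if ω i then 1 else -1) * g ω =
      bernoulliExp p (discreteDeriv i g) := by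
  refine mul_left_cancel₀ two_ne_zero ?_
  rw [two_mul_bernoulliExp p i, coordAvg_discreteDeriv, two_mul_sum_eq_sum_update i]
  refine Finset.sum_congr rfl fun ω _ => ?_
  simp only [bernoulliWeightErase_update, update_self, discreteDeriv, if_true, Bool.false_eq_true,
    if_false]
  ring

theorem hasDerivAt_bernoulliExp (p : ℝ) (g : (ι → Bool) → ℝ) :
    HasDerivAt (fun q => bernoulliExp q g) (∑ i, bernoulliExp p (discreteDeriv i g)) p := by
  refine (HasDerivAt.fun_sum fun ω _ =>
    (hasDerivAt_bernoulliWeight p ω).mul_const (g ω)).congr_deriv ?_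
  simp only [← sum_bernoulliWeightErase_mul_sign_mul, Finset.sum_mul]
  exact Finset.sum_comm

end Russo

section LogSobolev

variable {p : ℝ}

theorem mul_log_le_mul_log_add {x m : ℝ} (hx : 0 ≤ x) (hm : 0 < m) :
    x * Real.log x ≤ x * Real.log m + x * (x / m - 1) := by
  obtain rfl | hx := hx.eq_or_lt
  · simp
  · have hlog := Real.log_le_sub_one_of_pos (div_pos hx hm)
    rw [Real.log_div hx.ne' hm.ne'] at hlog
    linarith [mul_le_mul_of_nonneg_left hlog hx.le]

theorem two_point_log_sobolev (hp : p ∈ Set.Icc (0 : ℝ) 1) (a b : ℝ) :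
    p * (a ^ 2 * Real.log (a ^ 2)) + (1 - p) * (b ^ 2 * Real.log (b ^ 2)) -
      (p * a ^ 2 + (1 - p) * b ^ 2) * Real.log (p * a ^ 2 + (1 - p) * b ^ 2) ≤ (a - b) ^ 2 := by
  have ha : 0 ≤ p * a ^ 2 := mul_nonneg hp.1 (sq_nonneg a)
  have hb : 0 ≤ (1 - p) * b ^ 2 := mul_nonneg (sub_nonneg.2 hp.2) (sq_nonneg b)
  set m := p * a ^ 2 + (1 - p) * b ^ 2 with hm
  obtain hm0 | hm0 : 0 = m ∨ 0 < m := (add_nonneg ha hb).eq_or_lt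
  · have ha0 : p * a ^ 2 = 0 := by linarith
    have hb0 : (1 - p) * b ^ 2 = 0 := by linarith
    rw [← mul_assoc, ← mul_assoc, ha0, hb0, ← hm0]
    simpa using sq_nonneg (a - b)
  have hloga := mul_le_mul_of_nonneg_left (mul_log_le_mul_log_add (sq_nonneg a) hm0) hp.1
  have hlogb := mul_le_mul_of_nonneg_left (mul_log_le_mul_log_add (sq_nonneg b) hm0)
    (sub_nonneg.2 hp.2)
  have hchi : p * (a ^ 2 * (a ^ 2 / m - 1)) + (1 - p) * (b ^ 2 * (b ^ 2 / m - 1)) =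
      p * (1 - p) * (a + b) ^ 2 / m * (a - b) ^ 2 := by
    field_simp
    rw [hm]
    ring
  have hratio : p * (1 - p) * (a + b) ^ 2 / m ≤ 1 := by
    rw [div_le_one hm0, hm]
    linarith [sq_nonneg (p * a - (1 - p) * b)]
  linarith [mul_le_of_le_one_left (sq_nonneg (a - b)) hratio]

theorem sqrt_sub_sqrt_sq_le (hp : p ∈ Set.Icc (0 : ℝ) 1) (a b c d : ℝ) :
    (√(p * a ^ 2 + (1 - p) * b ^ 2) - √(p * c ^ 2 + (1 - p) * d ^ 2)) ^ 2 ≤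
      p * (a - c) ^ 2 + (1 - p) * (b - d) ^ 2 := by
  have hp' : 0 ≤ 1 - p := sub_nonneg.2 hp.2
  have hx : 0 ≤ p * a ^ 2 + (1 - p) * b ^ 2 := by have := hp.1; positivity
  have hy : 0 ≤ p * c ^ 2 + (1 - p) * d ^ 2 := by have := hp.1; positivity
  have hcauchy : p * (a * c) + (1 - p) * (b * d) ≤
      √(p * a ^ 2 + (1 - p) * b ^ 2) * √(p * c ^ 2 + (1 - p) * d ^ 2) := by
    rw [← Real.sqrt_mul hx]
    refine Real.le_sqrt_of_sq_le ?_
    linarith [mul_nonneg (mul_nonneg hp.1 hp') (sq_nonneg (a * d - b * c))]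
  rw [sub_sq, Real.sq_sqrt hx, Real.sq_sqrt hy]
  linarith

variable {ι : Type*} [Fintype ι] [DecidableEq ι]

/-- The entropy `𝔼_p[g log g] - 𝔼_p[g] log 𝔼_p[g]` of a nonnegative function, with `0 log 0 = 0`. -/
noncomputable def bernoulliEnt (p : ℝ) (g : (ι → Bool) → ℝ) : ℝ :=
  bernoulliExp p (fun ω => g ω * Real.log (g ω)) - bernoulliExp p g * Real.log (bernoulliExp p g)

theorem bernoulliEnt_sq_le_add (hp : p ∈ Set.Icc (0 : ℝ) 1) (i : ι) (g : (ι → Bool) → ℝ) :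
    bernoulliEnt p (fun ω => g ω ^ 2) ≤
      bernoulliEnt p (coordAvg p i fun ω => g ω ^ 2) +
        bernoulliExp p (fun ω => discreteDeriv i g ω ^ 2) := by
  have hcond := bernoulliExp_mono hp fun ω =>
    two_point_log_sobolev hp (g (update ω i true)) (g (update ω i false))
  rw [bernoulliExp_sub] at hcond
  rw [bernoulliEnt, bernoulliEnt, bernoulliExp_coordAvg,
    ← bernoulliExp_coordAvg p i fun ω => g ω ^ 2 * Real.log (g ω ^ 2)]
  change bernoulliExp p (coordAvg p i fun ω => g ω ^ 2 * Real.log (g ω ^ 2)) -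
    bernoulliExp p (fun ω => coordAvg p i (fun η => g η ^ 2) ω *
      Real.log (coordAvg p i (fun η => g η ^ 2) ω)) ≤
        bernoulliExp p (fun ω => discreteDeriv i g ω ^ 2) at hcond
  linarith

theorem bernoulliExp_discreteDeriv_sqrt_sq_le (hp : p ∈ Set.Icc (0 : ℝ) 1) {i j : ι}
    (hij : j ≠ i) (g : (ι → Bool) → ℝ) :
    bernoulliExp p (fun ω => discreteDeriv j (fun η => √(coordAvg p i (fun η => g η ^ 2) η)) ω ^ 2)
      ≤ bernoulliExp p (fun ω => discreteDeriv j g ω ^ 2) := by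
  rw [← bernoulliExp_coordAvg p i fun ω => discreteDeriv j g ω ^ 2]
  refine bernoulliExp_mono hp fun ω => ?_
  simp only [coordAvg, discreteDeriv, update_comm hij]
  exact sqrt_sub_sqrt_sq_le hp _ _ _ _

theorem bernoulliEnt_sq_le_of_dependsOn (hp : p ∈ Set.Icc (0 : ℝ) 1) (S : Finset ι)
    {g : (ι → Bool) → ℝ} (hg : DependsOn g S) :
    bernoulliEnt p (fun ω => g ω ^ 2) ≤
      ∑ j ∈ S, bernoulliExp p (fun ω => discreteDeriv j g ω ^ 2) := by
  induction S using Finset.induction_on generalizing g with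
  | empty =>
    obtain ⟨c, rfl⟩ : ∃ c, g = fun _ => c :=
      ⟨g fun _ => false, funext fun ω => hg (by simp)⟩
    simp [bernoulliEnt, bernoulliExp_const]
  | insert i S hi ih =>
    set h : (ι → Bool) → ℝ := fun ω => √(coordAvg p i (fun η => g η ^ 2) ω)
    have hsq : (coordAvg p i fun ω => g ω ^ 2) = fun ω => h ω ^ 2 := by
      funext ω
      refine (Real.sq_sqrt ?_).symm
      exact add_nonneg (mul_nonneg hp.1 (sq_nonneg _))
        (mul_nonneg (sub_nonneg.2 hp.2) (sq_nonneg _))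
    have hdep : DependsOn h S := fun ω η hωη => congrArg Real.sqrt
      (dependsOn_coordAvg hi p (fun ω η hωη => congrArg (· ^ 2) (hg hωη)) hωη)
    calc bernoulliEnt p (fun ω => g ω ^ 2)
        ≤ bernoulliEnt p (fun ω => h ω ^ 2) + bernoulliExp p (fun ω => discreteDeriv i g ω ^ 2) :=
          hsq ▸ bernoulliEnt_sq_le_add hp i g
      _ ≤ ∑ j ∈ S, bernoulliExp p (fun ω => discreteDeriv j g ω ^ 2) +
            bernoulliExp p (fun ω => discreteDeriv i g ω ^ 2) := by
          gcongr
          refine (ih hdep).trans (Finset.sum_le_sum fun j hj => ?_)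
          exact bernoulliExp_discreteDeriv_sqrt_sq_le hp (ne_of_mem_of_not_mem hj hi) g
      _ = ∑ j ∈ insert i S, bernoulliExp p (fun ω => discreteDeriv j g ω ^ 2) := by
          rw [Finset.sum_insert hi, add_comm]

theorem bernoulliEnt_sq_le (hp : p ∈ Set.Icc (0 : ℝ) 1) (g : (ι → Bool) → ℝ) :
    bernoulliEnt p (fun ω => g ω ^ 2) ≤ ∑ j, bernoulliExp p (fun ω => discreteDeriv j g ω ^ 2) :=
  bernoulliEnt_sq_le_of_dependsOn hp Finset.univ (by simpa using dependsOn_univ g)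

end LogSobolev

section FalikSamorodnitsky

theorem le_sq_mul_log_sq {r : ℝ} (hr : 0 < r) (x : ℝ) :
    (2 * Real.log r + 2) * x ^ 2 - 2 * r * |x| ≤ x ^ 2 * Real.log (x ^ 2) := by
  obtain rfl | hx := eq_or_ne x 0
  · simp
  have hx' : 0 < |x| := abs_pos.2 hx
  have hlog := mul_le_mul_of_nonneg_left (Real.log_le_sub_one_of_pos (div_pos hr hx'))
    (by positivity : 0 ≤ 2 * |x| ^ 2)
  have hdiv : 2 * |x| ^ 2 * (r / |x| - 1) = 2 * r * |x| - 2 * |x| ^ 2 := by field_simp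
  rw [Real.log_div hr.ne' hx'.ne', hdiv, sq_abs, Real.log_abs] at hlog
  rw [Real.log_pow, Nat.cast_ofNat]
  linarith

variable {ι : Type*} [Fintype ι] [DecidableEq ι] {p s : ℝ}

theorem le_bernoulliEnt_sq (hp : p ∈ Set.Icc (0 : ℝ) 1) (hs : 0 < s) (g : (ι → Bool) → ℝ) :
    bernoulliExp p (fun ω => g ω ^ 2) * Real.log s - s * bernoulliExp p (fun ω => |g ω|) ^ 2 ≤
      bernoulliEnt p (fun ω => g ω ^ 2) := by
  rw [bernoulliEnt]
  set v := bernoulliExp p (fun ω => g ω ^ 2) with hv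
  set a := bernoulliExp p (fun ω => |g ω|) with ha
  obtain hv0 | hv0 := (bernoulliExp_nonneg hp fun ω => sq_nonneg (g ω)).eq_or_lt
  · rw [bernoulliExp_mul_eq_zero hp (fun ω => sq_nonneg (g ω)) hv0.symm, hv, ← hv0]
    linarith [mul_nonneg hs.le (sq_nonneg a)]
  have hlog : 2 * Real.log (√v * √s) = Real.log v + Real.log s := by
    rw [Real.log_mul (Real.sqrt_pos.2 hv0).ne' (Real.sqrt_pos.2 hs).ne', Real.log_sqrt hv0.le,
      Real.log_sqrt hs.le]
    ring
  have hpointwise := bernoulliExp_mono hp fun ω =>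
    le_sq_mul_log_sq (mul_pos (Real.sqrt_pos.2 hv0) (Real.sqrt_pos.2 hs)) (g ω)
  rw [bernoulliExp_sub, bernoulliExp_const_mul, bernoulliExp_const_mul, hlog, ← hv, ← ha]
    at hpointwise
  have hamgm : 2 * (√v * √s) * a ≤ v + s * a ^ 2 := by
    have h := sq_nonneg (√v - √s * a)
    rw [sub_sq, mul_pow, Real.sq_sqrt hv0.le, Real.sq_sqrt hs.le] at h
    linarith
  linarith

theorem sq_sub_coordAvg_mul_log_le (hp : p ∈ Set.Icc (0 : ℝ) 1) (hs : 0 < s) (i : ι)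
    (g : (ι → Bool) → ℝ) :
    bernoulliExp p (fun ω => (g ω - coordAvg p i g ω) ^ 2) * Real.log s ≤
      ∑ j, bernoulliExp p (fun ω => discreteDeriv j (fun η => g η - coordAvg p i g η) ω ^ 2) +
        s * bernoulliExp p (fun ω => |discreteDeriv i g ω|) ^ 2 := by
  have hent := (le_bernoulliEnt_sq hp hs _).trans
    (bernoulliEnt_sq_le hp fun ω => g ω - coordAvg p i g ω)
  have hL1 : s * bernoulliExp p (fun ω => |g ω - coordAvg p i g ω|) ^ 2 ≤
      s * bernoulliExp p (fun ω => |discreteDeriv i g ω|) ^ 2 := by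
    gcongr
    · exact bernoulliExp_nonneg hp fun _ => abs_nonneg _
    · exact bernoulliExp_mono hp (abs_sub_coordAvg_le hp i g)
  linarith

theorem variance_mul_log_le_of_dependsOn (hp : p ∈ Set.Icc (0 : ℝ) 1) (hs : 0 < s)
    (S : Finset ι) {g : (ι → Bool) → ℝ} (hg : DependsOn g S) :
    (bernoulliExp p (fun ω => g ω ^ 2) - bernoulliExp p g ^ 2) * Real.log s ≤
      ∑ j, bernoulliExp p (fun ω => discreteDeriv j g ω ^ 2) +
        s * ∑ j ∈ S, bernoulliExp p (fun ω => |discreteDeriv j g ω|) ^ 2 := by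
  induction S using Finset.induction_on generalizing g with
  | empty =>
    obtain ⟨c, rfl⟩ : ∃ c, g = fun _ => c :=
      ⟨g fun _ => false, funext fun ω => hg (by simp)⟩
    simp [discreteDeriv, bernoulliExp_const]
  | insert i S hi ih =>
    have hrest := ih (dependsOn_coordAvg hi p hg)
    have hdiff := sq_sub_coordAvg_mul_log_le hp hs i g
    have hL1 : s * ∑ j ∈ S, bernoulliExp p (fun ω => |discreteDeriv j (coordAvg p i g) ω|) ^ 2 ≤
        s * ∑ j ∈ S, bernoulliExp p (fun ω => |discreteDeriv j g ω|) ^ 2 := by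
      gcongr with j hj
      · exact bernoulliExp_nonneg hp fun _ => abs_nonneg _
      · exact bernoulliExp_abs_discreteDeriv_coordAvg_le hp (ne_of_mem_of_not_mem hj hi) g
    rw [bernoulliExp_coordAvg] at hrest
    rw [Finset.sum_insert hi, bernoulliExp_sq_eq_add p i g]
    simp only [bernoulliExp_discreteDeriv_sq_eq_add p i _ g, Finset.sum_add_distrib]
    linarith

theorem variance_mul_log_le (hp : p ∈ Set.Icc (0 : ℝ) 1) (hs : 0 < s) (g : (ι → Bool) → ℝ) :
    (bernoulliExp p (fun ω => g ω ^ 2) - bernoulliExp p g ^ 2) * Real.log s ≤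
      ∑ j, bernoulliExp p (fun ω => discreteDeriv j g ω ^ 2) +
        s * ∑ j, bernoulliExp p (fun ω => |discreteDeriv j g ω|) ^ 2 :=
  variance_mul_log_le_of_dependsOn hp hs Finset.univ (by simpa using dependsOn_univ g)

end FalikSamorodnitsky

section BooleanFunctions

variable {ι : Type*}

theorem boolInd_sq (f : (ι → Bool) → Bool) (ω : ι → Bool) : boolInd f ω ^ 2 = boolInd f ω := by
  simp [boolInd]

variable [DecidableEq ι]

theorem abs_discreteDeriv_boolInd (f : (ι → Bool) → Bool) (i : ι) (ω : ι → Bool) :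
    |discreteDeriv i (boolInd f) ω| = |boolInd f ω - boolInd f (flipCoord i ω)| := by
  cases hω : ω i
  · rw [discreteDeriv, flipCoord, hω, ← hω, update_eq_self, hω, abs_sub_comm, Bool.not_false]
  · rw [discreteDeriv, flipCoord, hω, ← hω, update_eq_self, hω, Bool.not_true]

theorem discreteDeriv_boolInd_sq (f : (ι → Bool) → Bool) (i : ι) (ω : ι → Bool) :
    discreteDeriv i (boolInd f) ω ^ 2 = |discreteDeriv i (boolInd f) ω| := by
  simp only [discreteDeriv, boolInd]
  split_ifs <;> norm_num

theorem discreteDeriv_boolInd_nonneg {f : (ι → Bool) → Bool} (hf : IncreasingBoolFun f) (i : ι)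
    (ω : ι → Bool) : 0 ≤ discreteDeriv i (boolInd f) ω := by
  have hle : f (update ω i false) ≤ f (update ω i true) :=
    hf _ _ (update_le_update_iff.2 ⟨Bool.false_le _, fun _ _ => le_rfl⟩)
  simp only [discreteDeriv, boolInd]
  revert hle
  cases f (update ω i false) <;> cases f (update ω i true) <;> simp

variable [Fintype ι] {p : ℝ}

theorem bernoulliVar_eq_sub (p : ℝ) (f : (ι → Bool) → Bool) :
    bernoulliVar p f = bernoulliExp p (fun ω => boolInd f ω ^ 2) - bernoulliMean p f ^ 2 := by
  simp only [bernoulliVar, sub_sq, mul_assoc, mul_comm (boolInd f _) (bernoulliMean p f),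
    bernoulliExp_add, bernoulliExp_sub, bernoulliExp_const_mul, bernoulliExp_const]
  rw [← bernoulliMean]
  ring

theorem bernoulliVar_le_one (p : ℝ) (f : (ι → Bool) → Bool) : bernoulliVar p f ≤ 1 := by
  have hmean : bernoulliExp p (fun ω => boolInd f ω ^ 2) = bernoulliMean p f := by
    simp only [boolInd_sq, bernoulliMean]
  rw [bernoulliVar_eq_sub, hmean]
  nlinarith [sq_nonneg (bernoulliMean p f - 1)]

theorem influence_nonneg (hp : p ∈ Set.Icc (0 : ℝ) 1) (f : (ι → Bool) → Bool) (i : ι) :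
    0 ≤ influence p f i :=
  bernoulliExp_nonneg hp fun _ => abs_nonneg _

theorem influence_eq_bernoulliExp_abs_discreteDeriv (p : ℝ) (f : (ι → Bool) → Bool) (i : ι) :
    influence p f i = bernoulliExp p (fun ω => |discreteDeriv i (boolInd f) ω|) := by
  simp only [influence, abs_discreteDeriv_boolInd]

theorem hasDerivAt_bernoulliMean {f : (ι → Bool) → Bool} (hf : IncreasingBoolFun f) (p : ℝ) :
    HasDerivAt (fun q => bernoulliMean q f) (∑ i, influence p f i) p := by
  simp only [influence_eq_bernoulliExp_abs_discreteDeriv,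
    abs_of_nonneg (discreteDeriv_boolInd_nonneg hf _ _)]
  exact hasDerivAt_bernoulliExp p (boolInd f)

theorem bernoulliVar_mul_log_le (hp : p ∈ Set.Icc (0 : ℝ) 1) {s : ℝ} (hs : 0 < s)
    (f : (ι → Bool) → Bool) :
    bernoulliVar p f * Real.log s ≤ ∑ i, influence p f i + s * ∑ i, influence p f i ^ 2 := by
  simpa only [bernoulliVar_eq_sub, bernoulliMean, influence_eq_bernoulliExp_abs_discreteDeriv,
    discreteDeriv_boolInd_sq] using variance_mul_log_le hp hs (boolInd f)

end BooleanFunctions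

section Symmetry

theorem card_mul_sum_sq_of_forall_eq {ι R : Type*} [Fintype ι] [CommSemiring R] {a : ι → R}
    (ha : ∀ i j, a i = a j) : Fintype.card ι * ∑ i, a i ^ 2 = (∑ i, a i) ^ 2 := by
  have hsum (i : ι) : ∑ j, a j = Fintype.card ι * a i := by
    rw [Finset.sum_congr rfl fun j _ => ha j i, Finset.sum_const, Finset.card_univ, nsmul_eq_mul]
  rw [sq (∑ i, a i), Finset.mul_sum, Finset.sum_mul]
  exact Finset.sum_congr rfl fun i _ => by rw [hsum i]; ring

variable {ι : Type*} [Fintype ι] [DecidableEq ι] {p : ℝ}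

theorem influence_apply_of_comp_eq (p : ℝ) {f : (ι → Bool) → Bool} {σ : Equiv.Perm ι}
    (hσ : ∀ ω, f (ω ∘ σ) = f ω) (i : ι) : influence p f (σ i) = influence p f i := by
  have hflip (ω : ι → Bool) : flipCoord i (ω ∘ σ) = flipCoord (σ i) ω ∘ σ :=
    (update_comp_eq_of_injective ω σ.injective i _).symm
  rw [influence, influence,
    ← bernoulliExp_comp_equiv p σ fun ω => |boolInd f ω - boolInd f (flipCoord i ω)|]
  simp only [hflip, boolInd, hσ]

theorem log_card_mul_bernoulliVar_le (hp : p ∈ Set.Icc (0 : ℝ) 1) {f : (ι → Bool) → Bool}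
    (hf : ∀ i j, influence p f i = influence p f j) :
    Real.log (Fintype.card ι) * bernoulliVar p f ≤ 4 * ∑ i, influence p f i := by
  obtain _ | _ := isEmpty_or_nonempty ι
  · simp
  set n := (Fintype.card ι : ℝ)
  set T := ∑ i, influence p f i
  have hn0 : 0 < n := Nat.cast_pos.2 Fintype.card_pos
  have hT0 : 0 ≤ T := Finset.sum_nonneg fun i _ => influence_nonneg hp f i
  have hlog_sqrt : Real.log √n = Real.log n / 2 := Real.log_sqrt hn0.le
  obtain hTn | hTn := le_total T √n
  · have hsum : √n * ∑ i, influence p f i ^ 2 ≤ T := by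
      refine le_of_mul_le_mul_left ?_ (Real.sqrt_pos.2 hn0)
      rw [← mul_assoc, Real.mul_self_sqrt hn0.le, card_mul_sum_sq_of_forall_eq hf, sq]
      exact mul_le_mul_of_nonneg_right hTn hT0
    have hvar := bernoulliVar_mul_log_le hp (Real.sqrt_pos.2 hn0) f
    rw [hlog_sqrt] at hvar
    linarith
  · have hlog : Real.log n ≤ 2 * √n := by
      linarith [Real.log_le_sub_one_of_pos (Real.sqrt_pos.2 hn0)]
    have hvar := mul_le_of_le_one_right (Real.log_natCast_nonneg (Fintype.card ι))
      (bernoulliVar_le_one p f)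
    linarith

theorem symmetric_sharp_threshold_general (hp : p ∈ Set.Icc (0 : ℝ) 1) {f : (ι → Bool) → Bool}
    (hf : IncreasingBoolFun f)
    (hsymm : ∀ i j, ∃ σ : Equiv.Perm ι, σ i = j ∧ ∀ ω, f (ω ∘ σ) = f ω) :
    1 / 4 * Real.log (Fintype.card ι) * bernoulliVar p f ≤
      deriv (fun q => bernoulliMean q f) p := by
  have hinfluence (i j : ι) : influence p f i = influence p f j := by
    obtain ⟨σ, rfl, hσ⟩ := hsymm i j
    exact (influence_apply_of_comp_eq p hσ i).symm
  rw [(hasDerivAt_bernoulliMean hf p).deriv]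
  linarith [log_card_mul_bernoulliVar_le hp hinfluence]

end Symmetry

/-- **Sharp threshold for symmetric increasing functions.**  There is a universal `c > 0`
such that for every `p ∈ (0,1)`, every `n ≥ 2` and every increasing boolean function
`f : {0,1}^n → {0,1}` invariant under a subgroup of permutations of the coordinates acting
transitively, the derivative of `p ↦ 𝔼_p[f]` is at least `c·(log n)·Var_p(f)`. -/
theorem symmetric_sharp_threshold :
    ∃ c : ℝ, 0 < c ∧ ∀ (n : ℕ), 2 ≤ n → ∀ (p : ℝ), p ∈ Set.Ioo (0 : ℝ) 1 →
      ∀ f : (Fin n → Bool) → Bool, IncreasingBoolFun f →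
      (∃ G : Subgroup (Equiv.Perm (Fin n)),
        (∀ i j : Fin n, ∃ σ ∈ G, σ i = j) ∧
        (∀ σ ∈ G, ∀ ω : Fin n → Bool, f (fun i => ω (σ i)) = f ω)) →
      c * Real.log n * bernoulliVar p f ≤ deriv (fun q : ℝ => bernoulliMean q f) p := by
  refine ⟨1 / 4, by norm_num, fun n _ p hp f hf ⟨G, htrans, hinv⟩ => ?_⟩
  simpa using symmetric_sharp_threshold_general (Set.Ioo_subset_Icc_self hp) hf fun i j =>
    (htrans i j).imp fun σ hσ => ⟨hσ.2, hinv σ hσ.1⟩
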